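/- Let L ≥ 2. The projection of the Kennedy–Tasaki transformation onto the hole-free subspace is given by the qubit formula P U_KT P = P ( ∏_{1≤u<v≤L} exp[ (iπ/4)(1+σᶻ_u)(1−σᶻ_v) ] ) P. -/

import Mathlib

noncomputable section
open Complex Matrix

/-- The Hilbert space operators of the `L`-site spin-1 chain: matrices on `(ℂ³)^{⊗L}`,
with the tensor factors indexed by sites and the single-site ordered basis `(|+⟩,|0⟩,|−⟩)`. -/
abbrev Op (L : ℕ) : Type := Matrix (Fin L → Fin 3) (Fin L → Fin 3) ℂ

/-- The spin-1 matrix `Sˣ`. -/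
def Sx : Matrix (Fin 3) (Fin 3) ℂ :=
  ((Real.sqrt 2 : ℝ) : ℂ)⁻¹ • !![0, 1, 0; 1, 0, 1; 0, 1, 0]

/-- The spin-1 matrix `Sʸ`. -/
def Sy : Matrix (Fin 3) (Fin 3) ℂ :=
  ((Real.sqrt 2 : ℝ) : ℂ)⁻¹ • !![0, -I, 0; I, 0, -I; 0, I, 0]

/-- The spin-1 matrix `Sᶻ = diag(1,0,−1)`. -/
def Sz : Matrix (Fin 3) (Fin 3) ℂ := !![1, 0, 0; 0, 0, 0; 0, 0, -1]

/-- `site A j` is the one-site operator `A` acting on site `j` and identity elsewhere. -/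
def site {L : ℕ} (A : Matrix (Fin 3) (Fin 3) ℂ) (j : Fin L) : Op L :=
  Matrix.of fun f g => ∏ k : Fin L, if k = j then A (f k) (g k) else (if f k = g k then 1 else 0)

/-- One factor `exp(iπ Sᶻ_u Sˣ_v)` of the Kennedy–Tasaki transformation. -/
def ktFactor {L : ℕ} (u v : Fin L) : Op L :=
  NormedSpace.exp (((Real.pi : ℂ) * I) • (site Sz u * site Sx v))

/-- The Kennedy–Tasaki transformation `U_KT = ∏_{1 ≤ u < v ≤ L} exp(iπ Sᶻ_u Sˣ_v)`
(the factors pairwise commute, so the ordering is immaterial). -/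
def UKT (L : ℕ) : Op L :=
  ((List.finRange L).map fun u =>
    ((List.finRange L).map fun v => if u < v then ktFactor u v else 1).prod).prod

/-- The p-wave basis vector `|↑⟩ = (|+⟩ − |−⟩)/√2`. -/
def up : Fin 3 → ℂ := ![((Real.sqrt 2 : ℝ) : ℂ)⁻¹, 0, -((Real.sqrt 2 : ℝ) : ℂ)⁻¹]

/-- The p-wave basis vector `|↓⟩ = |0⟩`. -/
def down : Fin 3 → ℂ := ![0, 1, 0]

/-- The p-wave basis vector `|h⟩ = (|+⟩ + |−⟩)/√2`. -/
def hole : Fin 3 → ℂ := ![((Real.sqrt 2 : ℝ) : ℂ)⁻¹, 0, ((Real.sqrt 2 : ℝ) : ℂ)⁻¹]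

/-- The rank-one operator `|a⟩⟨b|`. -/
def ketbra (a b : Fin 3 → ℂ) : Matrix (Fin 3) (Fin 3) ℂ := Matrix.vecMulVec a (star b)

/-- `σˣ = |↑⟩⟨↓| + |↓⟩⟨↑|` (annihilating `|h⟩`). -/
def sigx : Matrix (Fin 3) (Fin 3) ℂ := ketbra up down + ketbra down up

/-- `σʸ = −i|↑⟩⟨↓| + i|↓⟩⟨↑|` (annihilating `|h⟩`). -/
def sigy : Matrix (Fin 3) (Fin 3) ℂ := (-I) • ketbra up down + I • ketbra down up

/-- `σᶻ = |↑⟩⟨↑| − |↓⟩⟨↓|` (annihilating `|h⟩`). -/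
def sigz : Matrix (Fin 3) (Fin 3) ℂ := ketbra up up - ketbra down down

/-- `n = |↑⟩⟨↑| + |↓⟩⟨↓|` (annihilating `|h⟩`). -/
def nMat : Matrix (Fin 3) (Fin 3) ℂ := ketbra up up + ketbra down down

/-- `h = |h⟩⟨h|`. -/
def hMat : Matrix (Fin 3) (Fin 3) ℂ := ketbra hole hole

/-- `P = ⊗_{j=1}^L n_j`, the orthogonal projection onto the hole-free subspace. -/
def Pproj (L : ℕ) : Op L := Matrix.of fun f g => ∏ k : Fin L, nMat (f k) (g k)

/-- The Heisenberg coupling `S_j · S_k`. -/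
def heis {L : ℕ} (j k : Fin L) : Op L :=
  site Sx j * site Sx k + site Sy j * site Sy k + site Sz j * site Sz k

/-- The bilinear-biquadratic Hamiltonian
`H_BLBQ(θ) = Σ_{j=1}^{L−1} [cosθ (S_j·S_{j+1}) + sinθ (S_j·S_{j+1})²]`. -/
def HBLBQ (L : ℕ) (θ : ℝ) : Op L :=
  ∑ j : Fin L, if h : (j : ℕ) + 1 < L then
    ((Real.cos θ : ℝ) : ℂ) • heis j ⟨(j : ℕ) + 1, h⟩
      + ((Real.sin θ : ℝ) : ℂ) • (heis j ⟨(j : ℕ) + 1, h⟩) ^ 2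
  else 0

/-- The self-dual Hamiltonian `H_SD(θ) = H_BLBQ(θ) + U_KT H_BLBQ(θ) U_KT`. -/
def HSD (L : ℕ) (θ : ℝ) : Op L := HBLBQ L θ + UKT L * HBLBQ L θ * UKT L

/-- The spin-1/2 XXZ Hamiltonian written in the p-wave basis:
`H_XXZ(θ) = (cosθ−sinθ) Σ_j (−σˣ_jσˣ_{j+1} + σʸ_jσʸ_{j+1}) + sinθ Σ_j σᶻ_jσᶻ_{j+1}`. -/
def HXXZ (L : ℕ) (θ : ℝ) : Op L :=
  ((Real.cos θ - Real.sin θ : ℝ) : ℂ) •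
    (∑ j : Fin L, if h : (j : ℕ) + 1 < L then
      -(site sigx j * site sigx ⟨(j : ℕ) + 1, h⟩) + site sigy j * site sigy ⟨(j : ℕ) + 1, h⟩
    else 0)
  + ((Real.sin θ : ℝ) : ℂ) •
    (∑ j : Fin L, if h : (j : ℕ) + 1 < L then
      site sigz j * site sigz ⟨(j : ℕ) + 1, h⟩
    else 0)

/-- The global product `∏_{j=1}^L exp(c • A_j)` of commuting single-site exponentials. -/
def globalProd (L : ℕ) (A : Matrix (Fin 3) (Fin 3) ℂ) (c : ℂ) : Op L :=
  ((List.finRange L).map fun j => NormedSpace.exp (c • site A j)).prod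

/-- The symmetry flux `F^y_j = exp(−iπ Σ_{k<j} Sʸ_k) · Sʸ_j`. -/
def fluxY (L : ℕ) (j : Fin L) : Op L :=
  NormedSpace.exp ((-((Real.pi : ℂ) * I)) •
    ∑ k : Fin L, if (k : ℕ) < (j : ℕ) then site Sy k else 0) * site Sy j


/-- The qubit form of the Kennedy–Tasaki transformation,
`∏_{1≤u<v≤L} exp[(iπ/4)(1+σᶻ_u)(1−σᶻ_v)]`. -/
def UKTqubit (L : ℕ) : Op L :=
  ((List.finRange L).map fun u =>
    ((List.finRange L).map fun v =>
      if u < v then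
        NormedSpace.exp ((((Real.pi / 4 : ℝ) : ℂ) * I) •
          ((1 + site sigz u) * (1 - site sigz v)))
      else 1).prod).prod

/-! The hole-free projection `P` intertwines both transformations with the same product of signs.
In terms of the matrix units `E i j = |i⟩⟨j|` of the p-wave basis, `Sᶻ = E ↑ h + E h ↑` and
`Sˣ = E ↓ h + E h ↓`, so `X = Sᶻ_u Sˣ_v` satisfies `X ^ 3 = X` and `exp (iπ X) = 1 - 2 X ^ 2`.
Moving `P` through this factor replaces `(Sᶻ)² = E ↑ ↑ + E h h` by `E ↑ ↑` and
`(Sˣ)² = E ↓ ↓ + E h h` by `E ↓ ↓`. On the qubit side, `P` replaces `(1 + σᶻ_u) (1 - σᶻ_v)` by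
four times the idempotent `p = (E ↑ ↑)_u (E ↓ ↓)_v`, and `exp (iπ p) = 1 - 2 p`. -/

theorem semiconjBy_list_prod_map {M ι : Type*} [Monoid M] {a : M} {x y : ι → M}
    (l : List ι) (h : ∀ i ∈ l, SemiconjBy a (x i) (y i)) :
    SemiconjBy a (l.map x).prod (l.map y).prod := by
  induction l with
  | nil => exact SemiconjBy.one_right a
  | cons i l ih =>
    simp only [List.map_cons, List.prod_cons]
    exact (h i List.mem_cons_self).mul_right (ih fun j hj => h j (List.mem_cons_of_mem i hj))

theorem semiconjBy_prod_pairs {M : Type*} [Monoid M] {L : ℕ} {a : M}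
    {x y : Fin L → Fin L → M} (h : ∀ u v, u < v → SemiconjBy a (x u v) (y u v)) :
    SemiconjBy a
      ((List.finRange L).map fun u =>
        ((List.finRange L).map fun v => if u < v then x u v else 1).prod).prod
      ((List.finRange L).map fun u =>
        ((List.finRange L).map fun v => if u < v then y u v else 1).prod).prod := by
  refine semiconjBy_list_prod_map _ fun u _ => semiconjBy_list_prod_map _ fun v _ => ?_
  split_ifs with huv
  · exact h u v huv
  · exact SemiconjBy.one_right a

theorem isIdempotentElem_half_smul_sq_add_self {K A : Type*} [Field K] [NeZero (2 : K)]
    [Semiring A] [Algebra K A] {x : A} (hx : x ^ 3 = x) :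
    IsIdempotentElem ((2 : K)⁻¹ • (x ^ 2 + x)) := by
  have hx4 : x ^ 4 = x ^ 2 := by rw [pow_succ, hx, ← sq]
  have sum_sq : (x ^ 2 + x) * (x ^ 2 + x) = (2 : K) • (x ^ 2 + x) := by
    calc (x ^ 2 + x) * (x ^ 2 + x) = x ^ 4 + x ^ 3 + (x ^ 3 + x ^ 2) := by noncomm_ring
      _ = (2 : K) • (x ^ 2 + x) := by rw [hx4, hx]; module
  rw [IsIdempotentElem, smul_mul_smul_comm, sum_sq, smul_smul, mul_assoc,
    inv_mul_cancel₀ two_ne_zero, mul_one]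

section Exponential

variable {𝔸 : Type*} [NormedRing 𝔸] [CompleteSpace 𝔸]

theorem exp_smul_of_isIdempotentElem {𝕂 : Type*} [RCLike 𝕂] [NormedAlgebra 𝕂 𝔸] {p : 𝔸}
    (hp : IsIdempotentElem p) (c : 𝕂) :
    NormedSpace.exp (c • p) = 1 + (NormedSpace.exp c - 1) • p := by
  have scalar_series := (NormedSpace.exp_series_hasSum_exp' (𝕂 := 𝕂) c).smul_const p
  have series := scalar_series.add (hasSum_ite_eq (0 : ℕ) (1 - p))
  have limit_eq : NormedSpace.exp c • p + (1 - p) = 1 + (NormedSpace.exp c - 1) • p := by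
    module
  rw [← limit_eq]
  refine (NormedSpace.exp_series_hasSum_exp' (𝕂 := 𝕂) (c • p)).unique ?_
  convert series using 2 with n
  cases n with
  | zero => simp
  | succ n => simp [smul_pow, hp.pow_succ_eq, smul_smul]

-- The eigenvalues of `x` lie in `{0, 1, -1}`; `p` and `q` project onto the last two eigenspaces.
theorem exp_smul_of_pow_three_eq_self [NormedAlgebra ℂ 𝔸] {x : 𝔸} (hx : x ^ 3 = x) (c : ℂ) :
    NormedSpace.exp (c • x) = 1 + Complex.sinh c • x + (Complex.cosh c - 1) • x ^ 2 := by
  let _ : NormedAlgebra ℚ 𝔸 := NormedAlgebra.restrictScalars ℚ ℂ 𝔸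
  set p : 𝔸 := (2 : ℂ)⁻¹ • (x ^ 2 + x) with hp
  set q : 𝔸 := (2 : ℂ)⁻¹ • ((-x) ^ 2 + -x) with hq
  have p_idem : IsIdempotentElem p := isIdempotentElem_half_smul_sq_add_self hx
  have q_idem : IsIdempotentElem q :=
    isIdempotentElem_half_smul_sq_add_self (by rw [Odd.neg_pow (by decide), hx])
  have pq_eq_zero : p * q = 0 := by
    have prod_eq : (x ^ 2 + x) * ((-x) ^ 2 + -x) = x ^ 3 * x - x ^ 2 := by noncomm_ring
    rw [hp, hq, smul_mul_smul_comm, prod_eq, hx, ← sq x, sub_self, smul_zero]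
  have pq_comm : Commute p q := by
    have x_comm : Commute (x ^ 2 + x) (-x) :=
      (((Commute.refl x).pow_left 2).add_left (Commute.refl x)).neg_right
    exact (((x_comm.pow_right 2).add_right x_comm).smul_right _).smul_left _
  have x_eq : c • x = c • p + (-c) • q := by
    rw [hp, hq, neg_sq]; module
  have prod_expand (a b : ℂ) : (1 + a • p) * (1 + b • q) = 1 + a • p + b • q := by
    rw [mul_one_add, add_mul, one_mul, smul_mul_smul_comm, pq_eq_zero, smul_zero, add_zero]
  rw [x_eq, NormedSpace.exp_add_of_commute ((pq_comm.smul_right _).smul_left _),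
    exp_smul_of_isIdempotentElem p_idem, exp_smul_of_isIdempotentElem q_idem, prod_expand,
    ← Complex.exp_eq_exp_ℂ, Complex.sinh, Complex.cosh, hp, hq, neg_sq]
  module

theorem exp_pi_mul_I_smul_of_pow_three_eq_self [NormedAlgebra ℂ 𝔸] {x : 𝔸} (hx : x ^ 3 = x) :
    NormedSpace.exp ((Real.pi * I : ℂ) • x) = 1 - (2 : ℂ) • x ^ 2 := by
  rw [exp_smul_of_pow_three_eq_self hx, Complex.sinh_mul_I, Complex.cosh_mul_I,
    Complex.sin_pi, Complex.cos_pi]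
  module

theorem exp_pi_mul_I_smul_of_isIdempotentElem [NormedAlgebra ℂ 𝔸] {p : 𝔸}
    (hp : IsIdempotentElem p) : NormedSpace.exp ((Real.pi * I : ℂ) • p) = 1 - (2 : ℂ) • p := by
  rw [exp_smul_of_isIdempotentElem hp, ← Complex.exp_eq_exp_ℂ, Complex.exp_pi_mul_I]
  module

end Exponential

section PiTensor

variable {ι n R : Type*} [Fintype ι] [DecidableEq ι] [Fintype n] [DecidableEq n] [CommSemiring R]

/-- The tensor product `⊗ᵢ F i` of a family of square matrices, as a matrix indexed by
configurations `ι → n`. It is multiplicative in the whole family. -/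
def piTensor : (ι → Matrix n n R) →* Matrix (ι → n) (ι → n) R where
  toFun F := Matrix.of fun f g => ∏ k, F k (f k) (g k)
  map_one' := by
    ext f g
    simp [Matrix.one_apply, Fintype.prod_ite_zero, funext_iff]
  map_mul' F G := by
    ext f g
    simp only [Pi.mul_apply, Matrix.mul_apply, Matrix.of_apply, ← Finset.prod_mul_distrib]
    rw [Finset.prod_univ_sum, Fintype.piFinset_univ]

theorem piTensor_apply (F : ι → Matrix n n R) (f g : ι → n) :
    piTensor F f g = ∏ k, F k (f k) (g k) := rfl

theorem semiconjBy_piTensor_mulSingle {N A B : Matrix n n R} (h : SemiconjBy N A B) (j : ι) :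
    SemiconjBy (piTensor fun _ => N) (piTensor (Pi.mulSingle j A))
      (piTensor (Pi.mulSingle j B)) := by
  refine SemiconjBy.map (Pi.semiconjBy_iff.2 fun k => ?_) piTensor
  obtain rfl | hkj := eq_or_ne k j
  · simpa only [Pi.mulSingle_eq_same] using h
  · simp only [Pi.mulSingle_eq_of_ne hkj, SemiconjBy.one_right]

end PiTensor

section Site

variable {L : ℕ}

theorem site_eq_piTensor (A : Matrix (Fin 3) (Fin 3) ℂ) (j : Fin L) :
    site A j = piTensor (Pi.mulSingle j A) := by
  ext f g
  rw [site, Matrix.of_apply, piTensor_apply]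
  refine Finset.prod_congr rfl fun k _ => ?_
  obtain rfl | hkj := eq_or_ne k j
  · rw [if_pos rfl, Pi.mulSingle_eq_same]
  · rw [if_neg hkj, Pi.mulSingle_eq_of_ne hkj, Matrix.one_apply]

theorem site_apply (A : Matrix (Fin 3) (Fin 3) ℂ) (j : Fin L) (f g : Fin L → Fin 3) :
    site A j f g = A (f j) (g j) * ∏ k ∈ Finset.univ.erase j, if f k = g k then 1 else 0 := by
  rw [site, Matrix.of_apply, ← Finset.mul_prod_erase _ _ (Finset.mem_univ j), if_pos rfl]
  congr 1
  exact Finset.prod_congr rfl fun k hk => if_neg (Finset.ne_of_mem_erase hk)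

/-- The embedding `A ↦ A_j` of one-site operators into chain operators, as an algebra
homomorphism. -/
def siteAlgHom (j : Fin L) : Matrix (Fin 3) (Fin 3) ℂ →ₐ[ℂ] Op L :=
  AlgHom.ofLinearMap
    { toFun := fun A => site A j
      map_add' := fun A B => by ext f g; simp only [site_apply, Matrix.add_apply, add_mul]
      map_smul' := fun c A => by
        ext f g
        simp only [site_apply, Matrix.smul_apply, smul_eq_mul, mul_assoc, RingHom.id_apply] }
    (by simp only [LinearMap.coe_mk, AddHom.coe_mk, site_eq_piTensor, Pi.mulSingle_one, map_one])
    (fun A B => by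
      simp only [LinearMap.coe_mk, AddHom.coe_mk, site_eq_piTensor, Pi.mulSingle_mul, map_mul])

theorem siteAlgHom_apply (j : Fin L) (A : Matrix (Fin 3) (Fin 3) ℂ) : siteAlgHom j A = site A j :=
  rfl

theorem commute_site {u v : Fin L} (huv : u ≠ v) (A B : Matrix (Fin 3) (Fin 3) ℂ) :
    Commute (site A u) (site B v) := by
  simpa only [site_eq_piTensor] using (Pi.mulSingle_commute huv A B).map piTensor

theorem site_mul_site_pow {u v : Fin L} (huv : u ≠ v) (A B : Matrix (Fin 3) (Fin 3) ℂ) (k : ℕ) :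
    (site A u * site B v) ^ k = site (A ^ k) u * site (B ^ k) v := by
  rw [(commute_site huv A B).mul_pow]
  simp only [← siteAlgHom_apply, map_pow]

theorem semiconjBy_Pproj_site {A B : Matrix (Fin 3) (Fin 3) ℂ} (h : SemiconjBy nMat A B)
    (j : Fin L) : SemiconjBy (Pproj L) (site A j) (site B j) := by
  simp only [site_eq_piTensor]
  exact semiconjBy_piTensor_mulSingle h j

end Site

section PWave

/-- The p-wave basis, indexed by `0 = ↑`, `1 = ↓`, `2 = h`. -/
def pWave : Fin 3 → Fin 3 → ℂ := ![up, down, hole]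

/-- The matrix unit `|i⟩⟨j|` of the p-wave basis. -/
def pWaveUnit (i j : Fin 3) : Matrix (Fin 3) (Fin 3) ℂ := ketbra (pWave i) (pWave j)

theorem pWaveUnit_apply (i j a b : Fin 3) :
    pWaveUnit i j a b = pWave i a * star (pWave j b) := rfl

theorem inv_sqrt_two_mul_self : ((√2 : ℝ) : ℂ)⁻¹ * ((√2 : ℝ) : ℂ)⁻¹ = 2⁻¹ := by
  rw [← mul_inv, ← Complex.ofReal_mul, Real.mul_self_sqrt zero_le_two, Complex.ofReal_ofNat]

theorem star_pWave_dotProduct_pWave (i j : Fin 3) :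
    star (pWave i) ⬝ᵥ pWave j = if i = j then 1 else 0 := by
  fin_cases i <;> fin_cases j <;>
    simp [pWave, up, down, hole, dotProduct, Fin.sum_univ_three, inv_sqrt_two_mul_self] <;>
    norm_num

theorem pWaveUnit_mul_pWaveUnit (i j k l : Fin 3) :
    pWaveUnit i j * pWaveUnit k l = if j = k then pWaveUnit i l else 0 := by
  rw [pWaveUnit, pWaveUnit, ketbra, ketbra, vecMulVec_mul_vecMulVec, star_pWave_dotProduct_pWave]
  split_ifs
  · rw [one_smul]; rfl
  · rw [zero_smul, vecMulVec_zero]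

theorem pWaveUnit_add_swap_sq {i j : Fin 3} (hij : i ≠ j) :
    (pWaveUnit i j + pWaveUnit j i) ^ 2 = pWaveUnit i i + pWaveUnit j j := by
  simp [sq, add_mul, mul_add, pWaveUnit_mul_pWaveUnit, hij, hij.symm, add_comm]

theorem pWaveUnit_add_swap_pow_three {i j : Fin 3} (hij : i ≠ j) :
    (pWaveUnit i j + pWaveUnit j i) ^ 3 = pWaveUnit i j + pWaveUnit j i := by
  rw [pow_succ, pWaveUnit_add_swap_sq hij]
  simp [add_mul, mul_add, pWaveUnit_mul_pWaveUnit, hij, hij.symm]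

theorem Sz_eq_pWaveUnit : Sz = pWaveUnit 0 2 + pWaveUnit 2 0 := by
  ext i j
  fin_cases i <;> fin_cases j <;>
    simp [Sz, pWaveUnit_apply, pWave, up, hole, inv_sqrt_two_mul_self] <;>
    norm_num

theorem Sx_eq_pWaveUnit : Sx = pWaveUnit 1 2 + pWaveUnit 2 1 := by
  ext i j
  fin_cases i <;> fin_cases j <;>
    simp [Sx, pWaveUnit_apply, pWave, down, hole]

theorem nMat_eq_pWaveUnit : nMat = pWaveUnit 0 0 + pWaveUnit 1 1 := rfl

theorem sigz_eq_pWaveUnit : sigz = pWaveUnit 0 0 - pWaveUnit 1 1 := rfl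

theorem semiconjBy_nMat_Sz_sq : SemiconjBy nMat (Sz ^ 2) (pWaveUnit 0 0) := by
  rw [Sz_eq_pWaveUnit, pWaveUnit_add_swap_sq (by decide)]
  simp [SemiconjBy, nMat_eq_pWaveUnit, add_mul, mul_add, pWaveUnit_mul_pWaveUnit]

theorem semiconjBy_nMat_Sx_sq : SemiconjBy nMat (Sx ^ 2) (pWaveUnit 1 1) := by
  rw [Sx_eq_pWaveUnit, pWaveUnit_add_swap_sq (by decide)]
  simp [SemiconjBy, nMat_eq_pWaveUnit, add_mul, mul_add, pWaveUnit_mul_pWaveUnit]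

theorem isIdempotentElem_nMat : IsIdempotentElem nMat := by
  simp [IsIdempotentElem, nMat_eq_pWaveUnit, add_mul, mul_add, pWaveUnit_mul_pWaveUnit]

theorem commute_nMat_sigz : Commute nMat sigz := by
  simp [Commute, SemiconjBy, nMat_eq_pWaveUnit, sigz_eq_pWaveUnit, sub_eq_add_neg, add_mul,
    mul_add, pWaveUnit_mul_pWaveUnit]

theorem semiconjBy_nMat_one : SemiconjBy nMat 1 nMat := by
  rw [SemiconjBy, mul_one, isIdempotentElem_nMat.eq]

theorem semiconjBy_nMat_one_add_sigz :
    SemiconjBy nMat (1 + sigz) ((2 : ℂ) • pWaveUnit 0 0) := by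
  have sum_eq : (2 : ℂ) • pWaveUnit 0 0 = nMat + sigz := by
    rw [nMat_eq_pWaveUnit, sigz_eq_pWaveUnit]; module
  rw [sum_eq]
  exact semiconjBy_nMat_one.add_right commute_nMat_sigz

theorem semiconjBy_nMat_one_sub_sigz :
    SemiconjBy nMat (1 - sigz) ((2 : ℂ) • pWaveUnit 1 1) := by
  have diff_eq : (2 : ℂ) • pWaveUnit 1 1 = nMat - sigz := by
    rw [nMat_eq_pWaveUnit, sigz_eq_pWaveUnit]; module
  rw [diff_eq]
  exact semiconjBy_nMat_one.sub_right commute_nMat_sigz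

end PWave

section KennedyTasaki

variable {L : ℕ} {u v : Fin L}

/-- The projection onto the configurations with `↑` at site `u` and `↓` at site `v`. -/
def upDownProj (u v : Fin L) : Op L := site (pWaveUnit 0 0) u * site (pWaveUnit 1 1) v

/-- The sign flip `1 - 2 |↑⟩⟨↑|_u |↓⟩⟨↓|_v`, the common hole-free form of the factors of
`UKT` and `UKTqubit`. -/
def signFactor (u v : Fin L) : Op L := 1 - (2 : ℂ) • upDownProj u v

/-- The product of the sign flips `signFactor u v` over `u < v`. -/
def signProd (L : ℕ) : Op L :=
  ((List.finRange L).map fun u =>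
    ((List.finRange L).map fun v => if u < v then signFactor u v else 1).prod).prod

theorem isIdempotentElem_upDownProj (huv : u ≠ v) : IsIdempotentElem (upDownProj u v) := by
  rw [IsIdempotentElem, ← sq, upDownProj, site_mul_site_pow huv]
  simp only [sq, pWaveUnit_mul_pWaveUnit, if_true]

attribute [local instance] Matrix.linftyOpNormedRing Matrix.linftyOpNormedAlgebra in
theorem ktFactor_eq (huv : u ≠ v) :
    ktFactor u v = 1 - (2 : ℂ) • (site (Sz ^ 2) u * site (Sx ^ 2) v) := by
  have Sz_cube : Sz ^ 3 = Sz := by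
    rw [Sz_eq_pWaveUnit, pWaveUnit_add_swap_pow_three (by decide)]
  have Sx_cube : Sx ^ 3 = Sx := by
    rw [Sx_eq_pWaveUnit, pWaveUnit_add_swap_pow_three (by decide)]
  have cube : (site Sz u * site Sx v) ^ 3 = site Sz u * site Sx v := by
    rw [site_mul_site_pow huv, Sz_cube, Sx_cube]
  rw [← site_mul_site_pow huv]
  exact exp_pi_mul_I_smul_of_pow_three_eq_self cube

theorem semiconjBy_Pproj_ktFactor (huv : u ≠ v) :
    SemiconjBy (Pproj L) (ktFactor u v) (signFactor u v) := by
  rw [ktFactor_eq huv]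
  have sites := (semiconjBy_Pproj_site semiconjBy_nMat_Sz_sq u).mul_right
    (semiconjBy_Pproj_site semiconjBy_nMat_Sx_sq v)
  exact (SemiconjBy.one_right _).sub_right (sites.smul_right 2)

theorem semiconjBy_Pproj_qubit_exponent (u v : Fin L) :
    SemiconjBy (Pproj L)
      ((((Real.pi / 4 : ℝ) : ℂ) * I) • ((1 + site sigz u) * (1 - site sigz v)))
      ((Real.pi * I : ℂ) • upDownProj u v) := by
  have sites := (semiconjBy_Pproj_site semiconjBy_nMat_one_add_sigz u).mul_right
    (semiconjBy_Pproj_site semiconjBy_nMat_one_sub_sigz v)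
  simp only [← siteAlgHom_apply, map_add, map_sub, map_one, map_smul, smul_mul_smul_comm] at sites
  have scalar : (((Real.pi / 4 : ℝ) : ℂ) * I) * (2 * 2) = Real.pi * I := by push_cast; ring
  rw [← scalar, mul_smul _ (2 * 2 : ℂ)]
  exact sites.smul_right (((Real.pi / 4 : ℝ) : ℂ) * I)

attribute [local instance] Matrix.linftyOpNormedRing Matrix.linftyOpNormedAlgebra in
theorem semiconjBy_Pproj_exp_qubit (huv : u ≠ v) :
    SemiconjBy (Pproj L)
      (NormedSpace.exp ((((Real.pi / 4 : ℝ) : ℂ) * I) •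
        ((1 + site sigz u) * (1 - site sigz v))))
      (signFactor u v) := by
  let _ : NormedAlgebra ℚ (Op L) := NormedAlgebra.restrictScalars ℚ ℂ (Op L)
  have exp_eq : NormedSpace.exp ((Real.pi * I : ℂ) • upDownProj u v) = signFactor u v :=
    exp_pi_mul_I_smul_of_isIdempotentElem (isIdempotentElem_upDownProj huv)
  rw [← exp_eq]
  exact (semiconjBy_Pproj_qubit_exponent u v).exp_right

theorem semiconjBy_Pproj_UKT (L : ℕ) : SemiconjBy (Pproj L) (UKT L) (signProd L) :=
  semiconjBy_prod_pairs fun _ _ huv => semiconjBy_Pproj_ktFactor huv.ne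

theorem semiconjBy_Pproj_UKTqubit (L : ℕ) : SemiconjBy (Pproj L) (UKTqubit L) (signProd L) :=
  semiconjBy_prod_pairs fun _ _ huv => semiconjBy_Pproj_exp_qubit huv.ne

theorem proj_UKT_qubit_general (L : ℕ) : Pproj L * UKT L = Pproj L * UKTqubit L := by
  rw [(semiconjBy_Pproj_UKT L).eq, (semiconjBy_Pproj_UKTqubit L).eq]

end KennedyTasaki

/-- The projection of the Kennedy–Tasaki transformation onto the hole-free
subspace is given by the qubit formula
`P U_KT P = P (∏_{1≤u<v≤L} exp[(iπ/4)(1+σᶻ_u)(1−σᶻ_v)]) P`. -/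
theorem proj_UKT_qubit (L : ℕ) (hL : 2 ≤ L) :
    Pproj L * UKT L * Pproj L = Pproj L * UKTqubit L * Pproj L := by
  rw [proj_UKT_qubit_general]

end
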